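/- Let f, f_n : [0,∞) → [0,∞) (n ∈ ℕ) be non-decreasing, unbounded, right-continuous functions, and let F and F_n denote the closed ranges of f and f_n respectively. If f_n converges to f locally uniformly, then for every x ∈ ℝ, liminf_{n→∞} ρ(x, F_n) ≥ ρ(x, F). -/

import Mathlib

open Set Filter Metric Topology

/-- `f : ℝ → ℝ` represents a non-decreasing, unbounded, right-continuous function
`[0,∞) → [0,∞)`: it is nonnegative, monotone, unbounded and right-continuous on `[0,∞)`. -/
def IsNDRC (f : ℝ → ℝ) : Prop :=
  (∀ s : ℝ, 0 ≤ s → 0 ≤ f s) ∧ MonotoneOn f (Set.Ici 0) ∧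
    (∀ M : ℝ, ∃ s : ℝ, 0 ≤ s ∧ M < f s) ∧
    (∀ s : ℝ, 0 ≤ s → ContinuousWithinAt f (Set.Ici s) s)

/-- The closed range `F = closure {f t : t ≥ 0}`. -/
def crange (f : ℝ → ℝ) : Set ℝ := closure (f '' Set.Ici 0)

/-- If `fn` are non-decreasing, unbounded, right-continuous functions
`[0,∞) → [0,∞)` converging locally uniformly to such a function `f`, then for every `x`,
`liminf_n ρ(x, Fn) ≥ ρ(x, F)`. -/
theorem stmt4 (f : ℝ → ℝ) (fn : ℕ → ℝ → ℝ)
    (hf : IsNDRC f) (hfn : ∀ n, IsNDRC (fn n))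
    (hconv : ∀ t : ℝ, 0 ≤ t → TendstoUniformlyOn fn f atTop (Set.Icc 0 t)) :
    ∀ x : ℝ,
      Metric.infDist x (crange f)
        ≤ Filter.liminf (fun n => Metric.infDist x (crange (fn n))) atTop := by
  intro x
  obtain ⟨-, -, hub, -⟩ := hf
  have hne : ∀ g : ℝ → ℝ, (g '' Set.Ici 0).Nonempty := fun g => ⟨g 0, 0, by simp, rfl⟩
  unfold crange
  simp only [Metric.infDist_closure]
  set d := Metric.infDist x (f '' Set.Ici 0) with hd
  obtain ⟨T, hT0, hT⟩ := hub (x + d)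
  have hu := Metric.tendstoUniformlyOn_iff.1 (hconv T hT0)
  have hbdd : IsBoundedUnder (· ≤ ·) atTop
      (fun n => Metric.infDist x (fn n '' Set.Ici 0)) := by
    refine ⟨|x - f 0| + 1, ?_⟩
    rw [eventually_map]
    filter_upwards [hu 1 one_pos] with n hn
    have h1 := hn 0 ⟨le_rfl, hT0⟩
    have h2 : Metric.infDist x (fn n '' Set.Ici 0) ≤ dist x (fn n 0) :=
      Metric.infDist_le_dist_of_mem ⟨0, by simp, rfl⟩
    have h3 := dist_triangle x (f 0) (fn n 0)
    rw [Real.dist_eq x (f 0)] at h3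
    linarith
  refine le_of_forall_sub_le fun ε hε => ?_
  refine le_liminf_of_le hbdd.isCoboundedUnder_flip ?_
  filter_upwards [hu ε hε] with n hn
  refine (Metric.le_infDist (hne _)).2 ?_
  rintro _ ⟨s, hs, rfl⟩
  have hs0 : 0 ≤ s := hs
  rcases le_total s T with h | h
  · have h1 := hn s ⟨hs0, h⟩
    have h2 : d ≤ dist x (f s) := Metric.infDist_le_dist_of_mem ⟨s, hs, rfl⟩
    have h3 := dist_triangle x (fn n s) (f s)
    rw [dist_comm (fn n s)] at h3
    linarith
  · have h1 := hn T ⟨hT0, le_rfl⟩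
    have h2 := (hfn n).2.1 (Set.mem_Ici.2 hT0) hs h
    rw [Real.dist_eq] at h1 ⊢
    have h3 := le_abs_self (f T - fn n T)
    have h4 := neg_le_abs (x - fn n s)
    linarith
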